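/- Let n−1 < q < p < ∞ and let Φ̃ be a bounded monotone countably additive set function on open subsets of Ω̃ such that for every pair of concentric balls F_r = cl B(y,r), G_r = B(y,2r) ⊂ Ω̃ the inequality (diam φ⁻¹(F_r)/r)^{1/(n−1)} ≤ C (Φ̃(G_r)/|G_r|)^{(p−q)/(pq)} (|φ⁻¹(G_r)|/|G_r|)^{1/(n−1)−1/q} holds. Then at almost every y ∈ Ω̃ the upper limit L(y, φ⁻¹) = limsup_{r→0} max_{|y−z|=r} |φ⁻¹(y) − φ⁻¹(z)|/r is finite, and φ⁻¹ is differentiable almost everywhere in Ω̃. -/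

import Mathlib

open MeasureTheory Metric Set Filter ENNReal

open scoped Topology NNReal

/-- A superadditive set function, bounded on the open subsets of an open set `W`, has finite upper
derivative with respect to Haar measure at almost every point of `W`. -/
theorem ae_exists_eventually_le_mul_measureReal_ball {E : Type*} [NormedAddCommGroup E]
    [NormedSpace ℝ E] [FiniteDimensional ℝ E] [MeasurableSpace E] [BorelSpace E]
    (μ : Measure E) [μ.IsAddHaarMeasure] {W : Set E} (hW : IsOpen W) {F : Set E → ℝ} {M : ℝ}
    (hnonneg : ∀ U, IsOpen U → U ⊆ W → 0 ≤ F U) (hbound : ∀ U, IsOpen U → U ⊆ W → F U ≤ M)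
    (hadd : ∀ U V, IsOpen U → IsOpen V → U ⊆ W → V ⊆ W → Disjoint U V →
      F U + F V ≤ F (U ∪ V)) :
    ∀ᵐ y ∂μ, y ∈ W → ∃ K : ℝ, ∀ᶠ r in 𝓝[>] (0 : ℝ), F (ball y r) ≤ K * μ.real (ball y r) := by
  have hsum : ∀ {ι : Type _} (s : Finset ι) (B : ι → Set E), (∀ i ∈ s, IsOpen (B i)) →
      (∀ i ∈ s, B i ⊆ W) → (s : Set ι).PairwiseDisjoint B →
      ∑ i ∈ s, F (B i) ≤ F (⋃ i ∈ s, B i) := by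
    classical
    intro ι s B
    induction s using Finset.induction_on with
    | empty => intro _ _ _; simpa using hnonneg ∅ isOpen_empty (empty_subset _)
    | insert a s ha ih =>
      intro ho hs hd
      rw [Finset.sum_insert ha, Finset.set_biUnion_insert]
      have ih' := ih (fun i hi => ho i (Finset.mem_insert_of_mem hi))
        (fun i hi => hs i (Finset.mem_insert_of_mem hi))
        (hd.subset (by simp))
      refine (add_le_add_right ih' _).trans (hadd _ _ (ho a (Finset.mem_insert_self _ _))
        (isOpen_biUnion fun i hi => ho i (Finset.mem_insert_of_mem hi))
        (hs a (Finset.mem_insert_self _ _))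
        (iUnion₂_subset fun i hi => hs i (Finset.mem_insert_of_mem hi)) ?_)
      rw [disjoint_iUnion₂_right]
      intro i hi
      exact hd (by simp) (by simp [hi]) (fun h => ha (h ▸ hi))
  set A : Set E := {y | y ∈ W ∧
    ∀ K : ℝ, ∃ᶠ r in 𝓝[>] (0 : ℝ), K * μ.real (ball y r) < F (ball y r)}
  suffices h : μ A = 0 by
    rw [ae_iff]
    convert h using 3
    simp
  set d := Module.finrank ℝ E
  have key : ∀ t : ℝ, 0 < t → μ A ≤ ENNReal.ofReal (6 ^ d * (M / t)) := by
    intro t ht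
    have hr : ∀ y : A, ∃ r : ℝ, 0 < r ∧ r ≤ 1 ∧ ball y.1 r ⊆ W ∧
        t * μ.real (ball y.1 r) < F (ball y.1 r) := by
      rintro ⟨y, hyW, hy⟩
      obtain ⟨ε, hε, hεW⟩ := Metric.isOpen_iff.1 hW y hyW
      have h1 : ∀ᶠ r in 𝓝[>] (0 : ℝ), r ∈ Ioo 0 (min ε 1) :=
        Ioo_mem_nhdsGT (lt_min hε one_pos)
      obtain ⟨r, hr1, hr2⟩ := ((hy t).and_eventually h1).exists
      exact ⟨r, hr2.1, (hr2.2.trans_le (min_le_right _ _)).le,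
        (ball_subset_ball (hr2.2.trans_le (min_le_left _ _)).le).trans hεW, hr1⟩
    choose r hr0 hr1 hrW hrF using hr
    obtain ⟨u, -, hud, hu⟩ := Vitali.exists_disjoint_subfamily_covering_enlargement_closedBall
      (univ : Set A) (fun y => y.1) r 1 (fun y _ => hr1 y) 5 (by norm_num)
    have hud' : u.PairwiseDisjoint fun y => ball y.1 (r y) :=
      hud.mono fun y => ball_subset_closedBall
    have huc : u.Countable := hud'.countable_of_isOpen (fun _ _ => isOpen_ball)
      (fun y _ => nonempty_ball.2 (hr0 y))
    have hcov : A ⊆ ⋃ y ∈ u, ball y.1 (6 * r y) := by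
      intro y hy
      obtain ⟨b, hb, hsub⟩ := hu ⟨y, hy⟩ (mem_univ _)
      refine mem_iUnion₂.2 ⟨b, hb, closedBall_subset_ball ?_ (hsub ?_)⟩
      · linarith [hr0 b]
      · exact mem_closedBall_self (hr0 _).le
    have hball : ∀ y : A, μ (ball y.1 (6 * r y)) =
        ENNReal.ofReal (6 ^ d) * μ (ball y.1 (r y)) := by
      intro y
      have := Measure.addHaar_ball_mul_of_pos μ y.1 (r := 6) (by norm_num) (r y)
      rw [this, Measure.addHaar_ball_center μ y.1]
    calc μ A ≤ μ (⋃ y ∈ u, ball y.1 (6 * r y)) := measure_mono hcov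
      _ ≤ ∑' y : u, μ (ball y.1.1 (6 * r y.1)) := measure_biUnion_le μ huc _
      _ = ENNReal.ofReal (6 ^ d) * ∑' y : u, μ (ball y.1.1 (r y.1)) := by
        simp_rw [hball, ENNReal.tsum_mul_left]
      _ ≤ ENNReal.ofReal (6 ^ d) * ENNReal.ofReal (M / t) := by
        gcongr
        rw [ENNReal.tsum_eq_iSup_sum]
        refine iSup_le fun s => ?_
        have : ∀ y : u, μ (ball y.1.1 (r y.1)) = ENNReal.ofReal (μ.real (ball y.1.1 (r y.1))) :=
          fun y => (ofReal_measureReal measure_ball_lt_top.ne).symm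
        simp_rw [this]
        rw [← ENNReal.ofReal_sum_of_nonneg (fun _ _ => measureReal_nonneg)]
        refine ENNReal.ofReal_le_ofReal ?_
        rw [le_div_iff₀ ht, mul_comm, Finset.mul_sum]
        calc ∑ y ∈ s, t * μ.real (ball y.1.1 (r y.1)) ≤ ∑ y ∈ s, F (ball y.1.1 (r y.1)) :=
              Finset.sum_le_sum fun y _ => (hrF y.1).le
          _ ≤ F (⋃ y ∈ s, ball y.1.1 (r y.1)) :=
              hsum s (fun y : u => ball y.1.1 (r y.1)) (fun _ _ => isOpen_ball)
                (fun y _ => hrW y.1) fun y _ z _ hyz =>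
                  hud' y.2 z.2 fun h => hyz (Subtype.ext h)
          _ ≤ M := hbound _ (isOpen_biUnion fun _ _ => isOpen_ball)
              (iUnion₂_subset fun y _ => hrW y.1)
      _ = ENNReal.ofReal (6 ^ d * (M / t)) := (ENNReal.ofReal_mul (by positivity)).symm
  have hlim : Tendsto (fun t : ℝ => ENNReal.ofReal (6 ^ d * (M / t))) atTop (𝓝 0) := by
    have := (tendsto_const_nhds (x := M)).div_atTop (tendsto_id (α := ℝ) (x := atTop))
    have := ENNReal.tendsto_ofReal (this.const_mul (6 ^ d))
    rwa [mul_zero, ENNReal.ofReal_zero] at this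
  exact le_antisymm (ge_of_tendsto hlim ((eventually_gt_atTop 0).mono key)) zero_le

/-- A function bounded above on `s` has a `k`-Lipschitz majorant on `s` which agrees with it at
every point of `s` where its one-point Lipschitz constant is at most `k`. -/
theorem exists_lipschitzWith_ge {α : Type*} [PseudoMetricSpace α] {f : α → ℝ} {s : Set α}
    (hf : BddAbove (f '' s)) (k : ℝ≥0) :
    ∃ u : α → ℝ, LipschitzWith k u ∧ (∀ x ∈ s, f x ≤ u x) ∧
      ∀ x ∈ s, (∀ z ∈ s, f z ≤ f x + k * dist z x) → u x = f x := by
  rcases s.eq_empty_or_nonempty with rfl | hs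
  · exact ⟨fun _ => 0, LipschitzWith.const' 0, by simp, by simp⟩
  have : Nonempty s := hs.to_subtype
  obtain ⟨b, hb⟩ := hf
  have hbdd : ∀ x, BddAbove (range fun z : s => f z - k * dist z.1 x) := by
    rintro x
    refine ⟨b, ?_⟩
    rintro _ ⟨z, rfl⟩
    have : f z ≤ b := hb (mem_image_of_mem f z.2)
    have : 0 ≤ k * dist z.1 x := by positivity
    dsimp only
    linarith
  have hle : ∀ x ∈ s, f x ≤ ⨆ z : s, (f z - k * dist z.1 x) := fun x hx => by
    simpa using le_ciSup (hbdd x) ⟨x, hx⟩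
  refine ⟨fun x => ⨆ z : s, (f z - k * dist z.1 x), ?_, hle, ?_⟩
  · refine LipschitzWith.of_le_add_mul k fun x y => ciSup_le fun z => ?_
    have h1 := le_ciSup (hbdd y) z
    have h2 : (k : ℝ) * dist z.1 y ≤ k * (dist z.1 x + dist x y) := by
      gcongr
      exact dist_triangle _ _ _
    linarith
  · intro x hx h
    refine le_antisymm (ciSup_le fun z => ?_) (hle x hx)
    linarith [h z z.2]

/-- A function squeezed between two differentiable functions touching at a point is
differentiable there. -/
theorem DifferentiableAt.squeeze {E : Type*} [NormedAddCommGroup E] [NormedSpace ℝ E]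
    {f u v : E → ℝ} {x : E} (hu : DifferentiableAt ℝ u x) (hv : DifferentiableAt ℝ v x)
    (hvf : ∀ᶠ z in 𝓝 x, v z ≤ f z) (hfu : ∀ᶠ z in 𝓝 x, f z ≤ u z)
    (hvx : v x = f x) (hux : u x = f x) : DifferentiableAt ℝ f x := by
  have hmin : IsLocalMin (u - v) x := by
    filter_upwards [hvf, hfu] with z h1 h2
    simp only [Pi.sub_apply, hux, hvx]
    linarith
  have heq : fderiv ℝ v x = fderiv ℝ u x := by
    have := hmin.fderiv_eq_zero
    rw [fderiv_sub hu hv] at this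
    exact (sub_eq_zero.1 this).symm
  have hu' := hasFDerivAt_iff_isLittleO.1 hu.hasFDerivAt
  have hv' := hasFDerivAt_iff_isLittleO.1 hv.hasFDerivAt
  rw [heq] at hv'
  refine HasFDerivAt.differentiableAt (f' := fderiv ℝ u x) (hasFDerivAt_iff_isLittleO.2 ?_)
  rw [Asymptotics.isLittleO_iff] at hu' hv' ⊢
  intro c hc
  filter_upwards [hu' hc, hv' hc, hvf, hfu] with z h1 h2 h3 h4
  rw [Real.norm_eq_abs, abs_le] at h1 h2 ⊢
  constructor <;> linarith

/-- **Stepanov's theorem** for real-valued functions. -/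
theorem ae_differentiableAt_of_isBigO_real {E : Type*} [NormedAddCommGroup E] [NormedSpace ℝ E]
    [FiniteDimensional ℝ E] [MeasurableSpace E] [BorelSpace E] (μ : Measure E)
    [μ.IsAddHaarMeasure] (f : E → ℝ) :
    ∀ᵐ x ∂μ, ((fun z => f z - f x) =O[𝓝 x] fun z => z - x) → DifferentiableAt ℝ f x := by
  have : Countable (TopologicalSpace.countableBasis E) :=
    (TopologicalSpace.countable_countableBasis E).to_subtype
  have hu : ∀ (s : TopologicalSpace.countableBasis E) (k : ℕ), ∀ᵐ x ∂μ,
      x ∈ s.1 → BddAbove (f '' s.1) → BddBelow (f '' s.1) →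
        (∀ z ∈ s.1, |f z - f x| ≤ k * dist z x) → DifferentiableAt ℝ f x := by
    rintro ⟨s, hs⟩ k
    by_cases hb : BddAbove (f '' s) ∧ BddBelow (f '' s)
    swap
    · exact Eventually.of_forall fun x _ h1 h2 => absurd ⟨h1, h2⟩ hb
    obtain ⟨u, hul, hfu, hu⟩ := exists_lipschitzWith_ge hb.1 k
    have hneg : BddAbove ((fun z => -f z) '' s) := by
      obtain ⟨b, hb⟩ := hb.2
      refine ⟨-b, ?_⟩
      rintro _ ⟨z, hz, rfl⟩
      exact neg_le_neg (hb (mem_image_of_mem f hz))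
    obtain ⟨v, hvl, hfv, hv⟩ := exists_lipschitzWith_ge hneg k
    filter_upwards [hul.ae_differentiableAt (μ := μ), hvl.ae_differentiableAt (μ := μ)]
      with x hux hvx hx _ _ h
    have hsx : s ∈ 𝓝 x := (TopologicalSpace.isOpen_of_mem_countableBasis hs).mem_nhds hx
    refine hux.squeeze hvx.neg ?_ ?_ ?_ ?_
    · filter_upwards [hsx] with z hz
      exact neg_le.1 (hfv z hz)
    · filter_upwards [hsx] with z hz using hfu z hz
    · have := hv x hx fun z hz => by
        have := (abs_le.1 (h z hz)).1
        push_cast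
        linarith
      simp [this]
    · refine hu x hx fun z hz => ?_
      have := (abs_le.1 (h z hz)).2
      push_cast
      linarith
  filter_upwards [ae_all_iff.2 fun s => ae_all_iff.2 (hu s)] with x hx hO
  obtain ⟨c, hc⟩ := hO.bound
  obtain ⟨k, hk⟩ := exists_nat_ge c
  obtain ⟨s, hs, hxs, hsub⟩ := (TopologicalSpace.isBasis_countableBasis E).mem_nhds_iff.1
    (inter_mem hc (ball_mem_nhds x one_pos))
  have hlip : ∀ z ∈ s, |f z - f x| ≤ k * dist z x := fun z hz => by
    have h1 : ‖f z - f x‖ ≤ c * ‖z - x‖ := (hsub hz).1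
    rw [dist_eq_norm]
    exact h1.trans (by gcongr)
  have hbd : ∀ z ∈ s, |f z - f x| ≤ k := fun z hz =>
    (hlip z hz).trans (mul_le_of_le_one_right (by positivity) (mem_ball.1 (hsub hz).2).le)
  refine hx ⟨s, hs⟩ k hxs ⟨f x + k, ?_⟩ ⟨f x - k, ?_⟩ hlip
  · rintro _ ⟨z, hz, rfl⟩
    linarith [(abs_le.1 (hbd z hz)).2]
  · rintro _ ⟨z, hz, rfl⟩
    linarith [(abs_le.1 (hbd z hz)).1]

/-- **Stepanov's theorem**: a map between finite-dimensional spaces is differentiable at almost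
every point where its upper Lipschitz constant is finite. -/
theorem ae_differentiableAt_of_isBigO {E F : Type*} [NormedAddCommGroup E] [NormedSpace ℝ E]
    [FiniteDimensional ℝ E] [MeasurableSpace E] [BorelSpace E] [NormedAddCommGroup F]
    [NormedSpace ℝ F] [FiniteDimensional ℝ F] (μ : Measure E) [μ.IsAddHaarMeasure] (f : E → F) :
    ∀ᵐ x ∂μ, ((fun z => f z - f x) =O[𝓝 x] fun z => z - x) → DifferentiableAt ℝ f x := by
  have h := ae_all_iff.2 fun i =>
    ae_differentiableAt_of_isBigO_real μ fun x => (toEuclidean (f x)).ofLp i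
  filter_upwards [h] with x hx hO
  rw [← toEuclidean.comp_differentiableAt_iff, differentiableAt_euclidean]
  intro i
  let L : F →L[ℝ] ℝ := (EuclideanSpace.proj i).comp toEuclidean.toContinuousLinearMap
  have hL : (fun z => L (f z) - L (f x)) =O[𝓝 x] fun z => f z - f x := by
    simpa only [map_sub] using L.isBigO_comp (fun z => f z - f x) (𝓝 x)
  exact hx i (hL.trans hO)

/-- On the line, the distance between two points of a connected set is at most its length. -/
theorem edist_le_volume_of_isPreconnected {U : Set (EuclideanSpace ℝ (Fin 1))}
    (hU : IsPreconnected U) {a b : EuclideanSpace ℝ (Fin 1)} (ha : a ∈ U) (hb : b ∈ U) :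
    edist a b ≤ volume U := by
  let e := (OrthonormalBasis.singleton (Fin 1) ℝ).repr
  have hpre : IsPreconnected (e ⁻¹' U) := by
    rw [← e.symm_symm, ← LinearIsometryEquiv.image_eq_preimage_symm]
    exact hU.image _ e.symm.continuous.continuousOn
  have hsub : uIcc (e.symm a) (e.symm b) ⊆ e ⁻¹' U :=
    hpre.ordConnected.uIcc_subset (by simpa) (by simpa)
  calc edist a b = edist (e.symm a) (e.symm b) := (e.symm.edist_map a b).symm
    _ = volume (uIcc (e.symm a) (e.symm b)) := by
      rw [Real.volume_interval, edist_dist, Real.dist_eq, abs_sub_comm]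
    _ ≤ volume (e ⁻¹' U) := measure_mono hsub
    _ = volume U :=
      e.measurePreserving.measure_preimage_equiv (f := e.toHomeomorph.toMeasurableEquiv) U

/-- The volume derivative of a continuous injective open map is finite almost everywhere. -/
theorem ae_exists_eventually_measureReal_image_ball_le {E F : Type*} [NormedAddCommGroup E]
    [NormedSpace ℝ E] [FiniteDimensional ℝ E] [MeasurableSpace E] [BorelSpace E]
    (μ : Measure E) [μ.IsAddHaarMeasure] [TopologicalSpace F] [MeasurableSpace F] [BorelSpace F]
    (ν : Measure F) [IsFiniteMeasureOnCompacts ν] {W : Set E} (hW : IsOpen W) {f : E → F}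
    (hf : ContinuousOn f W) (hinj : InjOn f W)
    (hopen : ∀ U, IsOpen U → U ⊆ W → IsOpen (f '' U)) :
    ∀ᵐ y ∂μ, y ∈ W → ∃ K : ℝ, ∀ᶠ r in 𝓝[>] (0 : ℝ),
      ν.real (f '' ball y r) ≤ K * μ.real (ball y r) := by
  rw [ae_iff]
  refine measure_null_of_locally_null _ fun y hy => ?_
  rw [mem_ofPred_eq, Classical.not_imp] at hy
  obtain ⟨ε, hε, hεW⟩ := nhds_basis_closedBall.mem_iff.1 (hW.mem_nhds hy.1)
  have hfin : ν (f '' closedBall y ε) < ⊤ :=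
    ((isCompact_closedBall y ε).image_of_continuousOn (hf.mono hεW)).measure_lt_top
  have hsub : ∀ U ⊆ ball y ε, f '' U ⊆ f '' closedBall y ε := fun U hU =>
    image_mono (hU.trans ball_subset_closedBall)
  have hfinU : ∀ U ⊆ ball y ε, ν (f '' U) ≠ ⊤ := fun U hU =>
    ((measure_mono (hsub U hU)).trans_lt hfin).ne
  have hballW : ball y ε ⊆ W := ball_subset_closedBall.trans hεW
  have key := ae_exists_eventually_le_mul_measureReal_ball μ (isOpen_ball (x := y) (ε := ε))
    (F := fun U => ν.real (f '' U)) (M := ν.real (f '' closedBall y ε))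
    (fun U _ _ => measureReal_nonneg) (fun U _ hU => measureReal_mono (hsub U hU) hfin.ne)
    (fun U V _ hV hUs hVs hd => by
      rw [image_union, measureReal_union
        (hd.image hinj (hUs.trans hballW) (hVs.trans hballW))
        (hopen V hV (hVs.trans hballW)).measurableSet (hfinU U hUs) (hfinU V hVs)])
  rw [ae_iff] at key
  refine ⟨_, inter_mem_nhdsWithin _ (ball_mem_nhds y hε), measure_mono_null ?_ key⟩
  rintro z ⟨hz1, hz2⟩
  rw [mem_ofPred_eq, Classical.not_imp] at hz1 ⊢
  exact ⟨hz2, hz1.2⟩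

/-- A nonnegative countably additive function on the open subsets of `W` is superadditive. -/
theorem add_le_of_hasSum_iUnion {X : Type*} [TopologicalSpace X] {W : Set X} {Φ : Set X → ℝ}
    (hnonneg : ∀ U, IsOpen U → U ⊆ W → 0 ≤ Φ U)
    (hadd : ∀ (U : Set X) (V : ℕ → Set X), IsOpen U → U ⊆ W → (∀ i, IsOpen (V i)) →
      (∀ i, V i ⊆ U) → Pairwise (Function.onFun Disjoint V) →
      HasSum (fun i => Φ (V i)) (Φ (⋃ i, V i)))
    {U V : Set X} (hU : IsOpen U) (hV : IsOpen V) (hUW : U ⊆ W) (hVW : V ⊆ W)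
    (hd : Disjoint U V) : Φ U + Φ V ≤ Φ (U ∪ V) := by
  let S : ℕ → Set X
    | 0 => U
    | 1 => V
    | _ => ∅
  have hSo : ∀ i, IsOpen (S i) := by
    rintro (- | - | i) <;> simp [S, hU, hV]
  have hSs : ∀ i, S i ⊆ U ∪ V := by
    rintro (- | - | i) <;> simp [S]
  have hSd : Pairwise (Function.onFun Disjoint S) := by
    rintro (- | - | i) (- | - | j) hij <;> simp_all [S, Function.onFun, hd.symm]
  have hSU : ⋃ i, S i = U ∪ V := by
    refine (iUnion_subset hSs).antisymm (union_subset ?_ ?_)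
    · exact subset_iUnion S 0
    · exact subset_iUnion S 1
  have hUVW : U ∪ V ⊆ W := union_subset hUW hVW
  have h := hadd (U ∪ V) S (hU.union hV) hUVW hSo hSs hSd
  rw [hSU] at h
  simpa [Finset.sum_range_succ, S] using
    sum_le_hasSum (Finset.range 2) (fun i _ => hnonneg _ (hSo i) ((hSs i).trans hUVW)) h

/-- If a bounded monotone countably additive set function controls the relative diameter
distortion of concentric balls, then the upper Lipschitz constant
`L(y,φ⁻¹) = limsup_{r→0} max_{|y-z|=r} |φ⁻¹(y)-φ⁻¹(z)|/r` is finite a.e., and the inverse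
mapping `φ⁻¹` is differentiable almost everywhere in `Ω̃`. -/
theorem stmt_17 (n : ℕ) (p q C : ℝ) (hq : (n : ℝ) - 1 < q) (hqp : q < p) (hC : 0 ≤ C)
    (Ω Ω' : Set (EuclideanSpace ℝ (Fin n)))
    (hΩ : IsOpen Ω) (hΩc : IsConnected Ω) (hΩ' : IsOpen Ω') (hΩ'c : IsConnected Ω')
    (φ ψ : EuclideanSpace ℝ (Fin n) → EuclideanSpace ℝ (Fin n))
    (hφ : ContinuousOn φ Ω) (hψ : ContinuousOn ψ Ω')
    (hmaps : Set.MapsTo φ Ω Ω') (hmaps' : Set.MapsTo ψ Ω' Ω)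
    (hli : ∀ x ∈ Ω, ψ (φ x) = x) (hri : ∀ y ∈ Ω', φ (ψ y) = y)
    (Φ : Set (EuclideanSpace ℝ (Fin n)) → ℝ) (M : ℝ)
    (hnonneg : ∀ U, IsOpen U → U ⊆ Ω' → 0 ≤ Φ U)
    (hbounded : ∀ U, IsOpen U → U ⊆ Ω' → Φ U ≤ M)
    (hmono : ∀ U₁ U₂, IsOpen U₁ → IsOpen U₂ → U₁ ⊆ U₂ → U₂ ⊆ Ω' → Φ U₁ ≤ Φ U₂)
    (hadd : ∀ (U : Set (EuclideanSpace ℝ (Fin n))) (V : ℕ → Set (EuclideanSpace ℝ (Fin n))),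
      IsOpen U → U ⊆ Ω' → (∀ i, IsOpen (V i)) → (∀ i, V i ⊆ U) →
      Pairwise (Function.onFun Disjoint V) →
      HasSum (fun i => Φ (V i)) (Φ (⋃ i, V i)))
    (hdiam : ∀ (y : EuclideanSpace ℝ (Fin n)) (r : ℝ), 0 < r →
      Metric.ball y (2 * r) ⊆ Ω' →
      (Metric.diam (ψ '' Metric.closedBall y r) / r) ^ (1 / ((n : ℝ) - 1))
        ≤ C * (Φ (Metric.ball y (2 * r)) / (volume (Metric.ball y (2 * r))).toReal)
              ^ ((p - q) / (p * q))
            * ((volume (ψ '' Metric.ball y (2 * r))).toReal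
                / (volume (Metric.ball y (2 * r))).toReal) ^ (1 / ((n : ℝ) - 1) - 1/q)) :
    (∀ᵐ y ∂(volume.restrict Ω'),
      Filter.limsup
        (fun r : ℝ => ⨆ z ∈ Metric.sphere y r, edist (ψ y) (ψ z) / ENNReal.ofReal r)
        (nhdsWithin 0 (Set.Ioi 0)) < ⊤) ∧
    (∀ᵐ y ∂(volume.restrict Ω'), DifferentiableAt ℝ ψ y) := by
  have hopen : ∀ U, IsOpen U → U ⊆ Ω' → IsOpen (ψ '' U) := fun U hU hUs => by
    have : ψ '' U = Ω ∩ φ ⁻¹' U := by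
      ext x
      constructor
      · rintro ⟨y, hy, rfl⟩
        exact ⟨hmaps' (hUs hy), by rwa [mem_preimage, hri y (hUs hy)]⟩
      · rintro ⟨hx, hxU⟩
        exact ⟨φ x, hxU, hli x hx⟩
    rw [this]
    exact hφ.isOpen_inter_preimage hΩ hU
  have hinj : InjOn ψ Ω' := fun y hy z hz h => by rw [← hri y hy, ← hri z hz, h]
  have hbase : ∀ᵐ y : EuclideanSpace ℝ (Fin n), y ∈ Ω' → ∃ K : ℝ, ∀ᶠ r in 𝓝[>] (0 : ℝ),
      ∀ z ∈ closedBall y r, dist (ψ z) (ψ y) ≤ K * r := by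
    have hΦadd : ∀ U V, IsOpen U → IsOpen V → U ⊆ Ω' → V ⊆ Ω' → Disjoint U V →
        Φ U + Φ V ≤ Φ (U ∪ V) := fun U V hU hV hUs hVs hd =>
      add_le_of_hasSum_iUnion (W := Ω') hnonneg hadd hU hV hUs hVs hd
    have htwo : Tendsto (fun r : ℝ => 2 * r) (𝓝[>] 0) (𝓝[>] 0) := by
      refine tendsto_nhdsWithin_iff.2 ⟨?_, ?_⟩
      · have : Tendsto (fun r : ℝ => 2 * r) (𝓝 0) (𝓝 (2 * 0)) := tendsto_id.const_mul 2
        rw [mul_zero] at this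
        exact this.mono_left nhdsWithin_le_nhds
      · filter_upwards [self_mem_nhdsWithin] with r hr
        have hr : 0 < r := hr
        exact mem_Ioi.2 (by positivity)
    filter_upwards [ae_exists_eventually_le_mul_measureReal_ball volume hΩ' hnonneg hbounded hΦadd,
      ae_exists_eventually_measureReal_image_ball_le volume volume hΩ' hψ hinj hopen]
      with y hΦy hVy hy
    obtain ⟨K₁, hK₁⟩ := hΦy hy
    obtain ⟨K₂, hK₂⟩ := hVy hy
    obtain ⟨ε, hε, hεW⟩ := nhds_basis_closedBall.mem_iff.1 (hΩ'.mem_nhds hy)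
    have hsmall : ∀ᶠ r in 𝓝[>] (0 : ℝ), r ∈ Ioo 0 ε := Ioo_mem_nhdsGT hε
    rcases n with - | - | m
    · exact ⟨0, Eventually.of_forall fun r z _ => by simp [Subsingleton.elim z y]⟩
    · refine ⟨2 * max K₂ 0 * volume.real (ball (0 : EuclideanSpace ℝ (Fin 1)) 1), ?_⟩
      filter_upwards [htwo.eventually hK₂, htwo.eventually hsmall, self_mem_nhdsWithin]
        with r h₂ hr hr0 z hz
      have hr0 : 0 < r := hr0
      have hsub : closedBall y (2 * r) ⊆ Ω' := (closedBall_subset_closedBall hr.2.le).trans hεW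
      have hconn : IsPreconnected (ψ '' ball y (2 * r)) :=
        (convex_ball y (2 * r)).isPreconnected.image _
          (hψ.mono (ball_subset_closedBall.trans hsub))
      have hfin : volume (ψ '' ball y (2 * r)) ≠ ⊤ :=
        ((measure_mono (image_mono ball_subset_closedBall)).trans_lt
          ((isCompact_closedBall y (2 * r)).image_of_continuousOn
            (hψ.mono hsub)).measure_lt_top).ne
      have hzb : z ∈ ball y (2 * r) := closedBall_subset_ball (by linarith) hz
      have hdist : dist (ψ z) (ψ y) ≤ volume.real (ψ '' ball y (2 * r)) := by
        rw [dist_edist]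
        exact ENNReal.toReal_mono hfin (edist_le_volume_of_isPreconnected hconn
          (mem_image_of_mem ψ hzb) (mem_image_of_mem ψ (mem_ball_self hr.1)))
      have hball : volume.real (ball y (2 * r)) =
          2 * r * volume.real (ball (0 : EuclideanSpace ℝ (Fin 1)) 1) := by
        rw [measureReal_def, Measure.addHaar_ball _ _ hr.1.le, ENNReal.toReal_mul,
          ENNReal.toReal_ofReal (by positivity)]
        simp [measureReal_def]
      calc dist (ψ z) (ψ y) ≤ K₂ * volume.real (ball y (2 * r)) := hdist.trans h₂
        _ ≤ max K₂ 0 * volume.real (ball y (2 * r)) := by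
          gcongr
          exact le_max_left _ _
        _ = _ := by rw [hball]; ring
    · have hm : ((m + 1 + 1 : ℕ) : ℝ) - 1 = m + 1 := by push_cast; ring
      rw [hm] at hq hdiam
      have hm0 : (0 : ℝ) < m + 1 := by positivity
      have hq0 : 0 < q := hm0.trans hq
      have hp0 : 0 < p := hq0.trans hqp
      have ha : 0 < 1 / ((m : ℝ) + 1) := by positivity
      have hα : 0 ≤ (p - q) / (p * q) := div_nonneg (by linarith) (by positivity)
      have hβ : 0 ≤ 1 / ((m : ℝ) + 1) - 1 / q :=
        sub_nonneg.2 (one_div_le_one_div_of_le hm0 hq.le)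
      refine ⟨(C * (max K₁ 0) ^ ((p - q) / (p * q)) *
        (max K₂ 0) ^ (1 / ((m : ℝ) + 1) - 1 / q)) ^ (1 / ((m : ℝ) + 1))⁻¹, ?_⟩
      filter_upwards [htwo.eventually hK₁, htwo.eventually hK₂, htwo.eventually hsmall,
        self_mem_nhdsWithin] with r h₁ h₂ hr hr0 z hz
      have hr0 : 0 < r := hr0
      have hsub : closedBall y (2 * r) ⊆ Ω' := (closedBall_subset_closedBall hr.2.le).trans hεW
      have hsubo : ball y (2 * r) ⊆ Ω' := ball_subset_closedBall.trans hsub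
      have hvol : 0 < volume.real (ball y (2 * r)) :=
        ENNReal.toReal_pos (measure_ball_pos volume y hr.1).ne' measure_ball_lt_top.ne
      have hbdd : Bornology.IsBounded (ψ '' closedBall y r) :=
        ((isCompact_closedBall y r).image_of_continuousOn
          (hψ.mono ((closedBall_subset_closedBall (by linarith)).trans hsub))).isBounded
      have hdist : dist (ψ z) (ψ y) ≤ diam (ψ '' closedBall y r) :=
        dist_le_diam_of_mem hbdd (mem_image_of_mem ψ hz)
          (mem_image_of_mem ψ (mem_closedBall_self hr0.le))
      have hD : 0 ≤ diam (ψ '' closedBall y r) / r := div_nonneg diam_nonneg hr0.le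
      have h₁' : Φ (ball y (2 * r)) / volume.real (ball y (2 * r)) ≤ max K₁ 0 :=
        ((div_le_iff₀ hvol).2 h₁).trans (le_max_left _ _)
      have h₂' : volume.real (ψ '' ball y (2 * r)) / volume.real (ball y (2 * r)) ≤ max K₂ 0 :=
        ((div_le_iff₀ hvol).2 h₂).trans (le_max_left _ _)
      have h₀ : 0 ≤ Φ (ball y (2 * r)) / volume.real (ball y (2 * r)) :=
        div_nonneg (hnonneg _ isOpen_ball hsubo) hvol.le
      have hbound : (diam (ψ '' closedBall y r) / r) ^ (1 / ((m : ℝ) + 1)) ≤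
          C * (max K₁ 0) ^ ((p - q) / (p * q)) *
            (max K₂ 0) ^ (1 / ((m : ℝ) + 1) - 1 / q) := by
        refine (hdiam y r hr0 hsubo).trans ?_
        gcongr <;> assumption
      rw [← div_le_iff₀ hr0]
      calc dist (ψ z) (ψ y) / r ≤ diam (ψ '' closedBall y r) / r := by gcongr
        _ = ((diam (ψ '' closedBall y r) / r) ^ (1 / ((m : ℝ) + 1))) ^
            (1 / ((m : ℝ) + 1))⁻¹ := (Real.rpow_rpow_inv hD ha.ne').symm
        _ ≤ _ := by gcongr
  constructor
  · rw [ae_restrict_iff' hΩ'.measurableSet]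
    filter_upwards [hbase] with y hy hyΩ
    obtain ⟨K, hK⟩ := hy hyΩ
    refine (limsup_le_of_le (a := ENNReal.ofReal K) (by isBoundedDefault) ?_).trans_lt
      ENNReal.ofReal_lt_top
    filter_upwards [hK, self_mem_nhdsWithin] with r hr hr0
    have hr0 : 0 < r := hr0
    refine iSup₂_le fun z hz => ENNReal.div_le_of_le_mul ?_
    rw [edist_comm, edist_dist, ← ENNReal.ofReal_mul' hr0.le]
    exact ENNReal.ofReal_le_ofReal (hr z (sphere_subset_closedBall hz))
  · rw [ae_restrict_iff' hΩ'.measurableSet]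
    filter_upwards [hbase, ae_differentiableAt_of_isBigO volume ψ] with y hy hd hyΩ
    obtain ⟨K, hK⟩ := hy hyΩ
    refine hd (Asymptotics.IsBigO.of_bound K ?_)
    obtain ⟨δ, hδ, hsub⟩ := mem_nhdsGT_iff_exists_Ioo_subset.1 hK
    filter_upwards [ball_mem_nhds y hδ] with z hz
    rcases eq_or_ne z y with rfl | hne
    · simp
    · rw [← dist_eq_norm, ← dist_eq_norm]
      exact hsub ⟨dist_pos.2 hne, hz⟩ z (mem_closedBall.2 le_rfl)
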